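/- arXiv:math/0007191 — 2 statements merged into one kernel-verified Lean document; each statement's English description precedes it below -/
import Mathlib

section
/- Let K be a field of characteristic zero and let the symmetric group S_m act on the polynomial ring K[x_{ij} : 1 ≤ i ≤ N, 1 ≤ j ≤ m] by simultaneously permuting the second index: σ·x_{ij} = x_{iσ(j)}. Then the ring of invariants is generated, as a K-algebra, by the power sums s_{r_1,…,r_N} = Σ_{j=1}^m x_{1j}^{r_1} x_{2j}^{r_2} ⋯ x_{Nj}^{r_N}, for r_1, …, r_N ≥ 0. -/
open scoped BigOperators

noncomputable section

/-- A quiver with a finite vertex set `I` and a finite arrow set `A`;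
`h a` and `t a` are the head and the tail of the arrow `a`. -/
structure FinQuiver where
  I : Type
  [fintypeI : Fintype I]
  [decEqI : DecidableEq I]
  A : Type
  [fintypeA : Fintype A]
  h : A → I
  t : A → I

attribute [instance] FinQuiver.fintypeI FinQuiver.decEqI FinQuiver.fintypeA

namespace FinQuiver

variable (Q : FinQuiver)

/-- Arrows of the double quiver `Q̄` : every arrow `a : i → j` of `Q` (as `Sum.inl a`)
together with a reverse arrow `a* : j → i` (as `Sum.inr a`). -/
@[reducible] def DA : Type := Q.A ⊕ Q.A

instance : Fintype Q.DA := inferInstanceAs (Fintype (Q.A ⊕ Q.A))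

/-- Head of an arrow of the double quiver. -/
@[reducible] def dh : Q.DA → Q.I := fun a => match a with
  | Sum.inl a => Q.h a
  | Sum.inr a => Q.t a

/-- Tail of an arrow of the double quiver. -/
@[reducible] def dt : Q.DA → Q.I := fun a => match a with
  | Sum.inl a => Q.t a
  | Sum.inr a => Q.h a

/-- The symmetric bilinear form
`(α,β) = ∑_{i∈I} 2 α_i β_i − ∑_{a∈Q̄} α_{h(a)} β_{t(a)}` on `ℤ^I`. -/
def bil (α β : Q.I → ℤ) : ℤ :=
  (∑ i, 2 * α i * β i) - ∑ a : Q.DA, α (Q.dh a) * β (Q.dt a)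

/-- `p(α) = 1 − q(α) = 1 − α·α + ∑_{a ∈ Q} α_{t(a)} α_{h(a)}`. -/
def pp (α : Q.I → ℤ) : ℤ :=
  1 - (∑ i, α i * α i) + ∑ a : Q.A, α (Q.t a) * α (Q.h a)

/-- The coordinate vector `ε_i` at a vertex `i`. -/
def ev (i : Q.I) : Q.I → ℤ := fun j => if j = i then 1 else 0

/-- The coordinate vector of a vertex, as a vector of natural numbers. -/
def evN (i : Q.I) : Q.I → ℕ := fun j => if j = i then 1 else 0

/-- A vertex is loopfree if no arrow has both its head and its tail there. -/
def Loopfree (i : Q.I) : Prop := ∀ a : Q.A, ¬ (Q.h a = i ∧ Q.t a = i)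

/-- The reflection `s_i(α) = α − (α,ε_i) ε_i` at a (loopfree) vertex `i`. -/
def refl (i : Q.I) (α : Q.I → ℤ) : Q.I → ℤ := α - Q.bil α (Q.ev i) • Q.ev i

/-- Two vertices are joined by some arrow. -/
def Adj (i j : Q.I) : Prop :=
  ∃ a : Q.A, (Q.h a = i ∧ Q.t a = j) ∨ (Q.h a = j ∧ Q.t a = i)

/-- The quiver is connected. -/
def Connected : Prop := ∀ i j : Q.I, Relation.ReflTransGen Q.Adj i j

/-- The support of the vector `α` is connected in `Q`. -/
def SuppConnected (α : Q.I → ℤ) : Prop :=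
  ∀ i j : Q.I, α i ≠ 0 → α j ≠ 0 →
    Relation.ReflTransGen (fun x y => α x ≠ 0 ∧ α y ≠ 0 ∧ Q.Adj x y) i j

/-- The fundamental region: nonzero nonnegative vectors with connected support
such that `(α, ε_i) ≤ 0` for every vertex `i`. -/
def InFund (α : Q.I → ℤ) : Prop :=
  α ≠ 0 ∧ (∀ i, 0 ≤ α i) ∧ Q.SuppConnected α ∧ ∀ i, Q.bil α (Q.ev i) ≤ 0

/-- The roots of the Kac root system attached to `Q` : the real roots form the orbit
of the simple roots (coordinate vectors at loopfree vertices) under the reflections at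
loopfree vertices, and the imaginary roots form the orbit of `±(fundamental region)`
under these reflections. -/
inductive IsRoot : (Q.I → ℤ) → Prop
  | simple (i : Q.I) (hi : Q.Loopfree i) : IsRoot (Q.ev i)
  | fund (α : Q.I → ℤ) (hα : Q.InFund α) : IsRoot α
  | neg_fund (α : Q.I → ℤ) (hα : Q.InFund α) : IsRoot (-α)
  | reflect (i : Q.I) (hi : Q.Loopfree i) (α : Q.I → ℤ) (hα : IsRoot α) :
      IsRoot (Q.refl i α)

/-- Positive roots: roots all of whose components are nonnegative. -/
def IsPosRoot (α : Q.I → ℤ) : Prop := Q.IsRoot α ∧ (∀ i, 0 ≤ α i) ∧ α ≠ 0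

/-- The Tits form is positive semidefinite. -/
def PosSemidef : Prop := ∀ α : Q.I → ℤ, 0 ≤ Q.bil α α

/-- The Tits form is positive definite. -/
def PosDef : Prop := Q.PosSemidef ∧ ∀ α : Q.I → ℤ, Q.bil α α = 0 → α = 0

/-- Dynkin quivers: connected, with positive definite Tits form. -/
def IsDynkin : Prop := Q.Connected ∧ Q.PosDef

/-- Extended Dynkin quivers: connected, with positive semidefinite but not
positive definite Tits form. -/
def IsExtDynkin : Prop := Q.Connected ∧ Q.PosSemidef ∧ ¬ Q.PosDef

/-- `δ` is the minimal positive imaginary root of an extended Dynkin quiver: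
the minimal nonzero nonnegative vector in the radical of the Tits form. -/
def IsMinImag (δ : Q.I → ℤ) : Prop :=
  (∀ i, 0 ≤ δ i) ∧ δ ≠ 0 ∧ (∀ i, Q.bil δ (Q.ev i) = 0) ∧
    ∀ β : Q.I → ℤ, (∀ i, 0 ≤ β i) → β ≠ 0 → (∀ i, Q.bil β (Q.ev i) = 0) →
      ∀ i, δ i ≤ β i

/-- The subquiver of `Q` on a subset `S` of vertices and a subset `B` of arrows. -/
def restrict (S : Set Q.I) (B : Set Q.A) (hh : ∀ a ∈ B, Q.h a ∈ S)
    (ht : ∀ a ∈ B, Q.t a ∈ S) : FinQuiver :=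
  { I := S
    fintypeI := Fintype.ofFinite S
    decEqI := Classical.decEq _
    A := B
    fintypeA := Fintype.ofFinite B
    h := fun a => ⟨Q.h a.1, hh a.1 a.2⟩
    t := fun a => ⟨Q.t a.1, ht a.1 a.2⟩ }

/-- The support quiver of a vector: the full subquiver on the support of `β`. -/
def suppQuiver (β : Q.I → ℤ) : FinQuiver :=
  Q.restrict {i | β i ≠ 0} {a | β (Q.h a) ≠ 0 ∧ β (Q.t a) ≠ 0}
    (fun _ ha => ha.1) (fun _ ha => ha.2)

/-- A dimension vector (of natural numbers), viewed in `ℤ^I`. -/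
def toZ (α : Q.I → ℕ) : Q.I → ℤ := fun i => (α i : ℤ)

/-- An oriented cycle in the double quiver `Q̄`, consisting of `n+1` arrows,
the tail of each arrow being the head of the (cyclically) next one. -/
structure Cyc (Q' : FinQuiver) where
  n : ℕ
  ar : Fin (n + 1) → Q'.DA
  compat : ∀ i : Fin (n + 1), Q'.dt (ar i) = Q'.dh (ar (i + 1))

section WithField

variable (K : Type) [Field K]

/-- `λ·α = ∑_i λ_i α_i`. -/
def pair (l : Q.I → K) (α : Q.I → ℤ) : K := ∑ i, l i * (α i : K)

/-- `R_λ^+`, the set of positive roots `α` with `λ·α = 0`. -/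
def Rplus (l : Q.I → K) : Set (Q.I → ℤ) :=
  {α | Q.IsPosRoot α ∧ Q.pair K l α = 0}

/-- `ℕ R_λ^+`, the set of sums (including the empty sum `0`) of elements of `R_λ^+`. -/
def NRplus (l : Q.I → K) : Set (Q.I → ℤ) :=
  (AddSubmonoid.closure (Q.Rplus K l) : AddSubmonoid (Q.I → ℤ))

/-- `Σ_λ` : the elements `α ∈ R_λ^+` with `p(α) > ∑ p(β⁽ᵗ⁾)` for every decomposition
of `α` as a sum of at least two elements `β⁽ᵗ⁾` of `R_λ^+`. -/
def SigmaSet (l : Q.I → K) : Set (Q.I → ℤ) :=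
  {α | α ∈ Q.Rplus K l ∧
    ∀ (n : ℕ) (β : Fin n → (Q.I → ℤ)), 2 ≤ n → (∀ j, β j ∈ Q.Rplus K l) →
      α = ∑ j, β j → (∑ j, Q.pp (β j)) < Q.pp α}

/-- The dual reflection `r_i(λ)_j = λ_j − (ε_i,ε_j) λ_i`. -/
def coRefl (i : Q.I) (l : Q.I → K) : Q.I → K :=
  fun j => l j - (Q.bil (Q.ev i) (Q.ev j) : ℤ) * l i

/-- A single admissible reflection applied to the pair `(λ, α)`:
a reflection at a loopfree vertex `i` with `λ_i ≠ 0`. -/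
def AdmStep (x y : (Q.I → K) × (Q.I → ℤ)) : Prop :=
  ∃ i : Q.I, Q.Loopfree i ∧ x.1 i ≠ 0 ∧ y.1 = Q.coRefl K i x.1 ∧ y.2 = Q.refl i x.2

/-- `(ν,β)` is obtained from `(λ,α)` by a sequence of admissible reflections:
the two pairs lie in the same class of the equivalence relation generated by
admissible reflections. -/
def AdmEquiv (x y : (Q.I → K) × (Q.I → ℤ)) : Prop :=
  Relation.EqvGen (Q.AdmStep K) x y

/-- The space `Rep(Q̄,α)` of representations of the double quiver. -/
def Rep (α : Q.I → ℕ) : Type :=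
  ∀ a : Q.DA, Matrix (Fin (α (Q.dh a))) (Fin (α (Q.dt a))) K

/-- The moment map
`μ_α(x)_i = ∑_{a∈Q, h(a)=i} x_a x_{a*} − ∑_{a∈Q, t(a)=i} x_{a*} x_a`. -/
def moment (α : Q.I → ℕ) (x : Q.Rep K α) (i : Q.I) :
    Matrix (Fin (α i)) (Fin (α i)) K :=
  (∑ a : Q.A, if h : Q.h a = i then
      (x (Sum.inl a) * x (Sum.inr a)).submatrix
        (Fin.cast (congrArg α h).symm) (Fin.cast (congrArg α h).symm)
    else 0)
  - ∑ a : Q.A, if h : Q.t a = i then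
      (x (Sum.inr a) * x (Sum.inl a)).submatrix
        (Fin.cast (congrArg α h).symm) (Fin.cast (congrArg α h).symm)
    else 0

/-- The fibre `μ_α^{-1}(λ)` of the moment map over (the central element
corresponding to) `λ`. -/
def MomentFiber (l : Q.I → K) (α : Q.I → ℕ) : Set (Q.Rep K α) :=
  {x | ∀ i : Q.I, Q.moment K α x i = l i • (1 : Matrix (Fin (α i)) (Fin (α i)) K)}

/-- The group `∏_i GL(α_i,K)`; it acts on `Rep(Q̄,α)` by conjugation, with the same
orbits and the same invariant functions as `G(α) = (∏_i GL(α_i,K))/K^*`. -/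
def Gl (α : Q.I → ℕ) : Type := ∀ i : Q.I, Matrix.GeneralLinearGroup (Fin (α i)) K

/-- The conjugation action of `∏_i GL(α_i,K)` on `Rep(Q̄,α)`. -/
def glAct (α : Q.I → ℕ) (g : Q.Gl K α) (x : Q.Rep K α) : Q.Rep K α :=
  fun a => (g (Q.dh a) : Matrix (Fin (α (Q.dh a))) (Fin (α (Q.dh a))) K) * x a *
    (((g (Q.dt a))⁻¹ : Matrix.GeneralLinearGroup (Fin (α (Q.dt a))) K) :
      Matrix (Fin (α (Q.dt a))) (Fin (α (Q.dt a))) K)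

/-- Coordinates on `Rep(Q̄,α)`: matrix entries. -/
def Coords (α : Q.I → ℕ) : Type :=
  Σ a : Q.DA, Fin (α (Q.dh a)) × Fin (α (Q.dt a))

/-- The coordinate ring `K[V]` of a subset `V` of `Rep(Q̄,α)` : the algebra of
`K`-valued functions on `V` which are restrictions of polynomial functions. -/
def fnRing (α : Q.I → ℕ) (V : Set (Q.Rep K α)) : Subalgebra K (↥V → K) :=
  (MvPolynomial.aeval
    (fun c : Q.Coords α => fun v : ↥V => v.1 c.1 c.2.1 c.2.2) :
    MvPolynomial (Q.Coords α) K →ₐ[K] (↥V → K)).range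

end WithField

end FinQuiver

/-- The subalgebra of functions invariant under a relation (e.g. the orbit
relation of a group action). -/
def relInv (K : Type) [Field K] {V : Type} (R : V → V → Prop) :
    Subalgebra K (V → K) where
  carrier := {f | ∀ x y : V, R x y → f x = f y}
  mul_mem' := by
    intro f g hf hg x y hxy
    simp only [Pi.mul_apply, hf x y hxy, hg x y hxy]
  one_mem' := fun x y _ => rfl
  add_mem' := by
    intro f g hf hg x y hxy
    simp only [Pi.add_apply, hf x y hxy, hg x y hxy]
  zero_mem' := fun x y _ => rfl
  algebraMap_mem' := fun c x y _ => rfl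

namespace FinQuiver

variable (Q : FinQuiver) (K : Type) [Field K]

/-- The coordinate ring of the Marsden–Weinstein reduction
`N(λ,α) = μ_α^{-1}(λ) ⫽ G(α)` : the `G(α)`-invariant functions in the coordinate
ring of `μ_α^{-1}(λ)`.  Two such reductions are isomorphic as (affine) varieties
exactly when these `K`-algebras are isomorphic. -/
def InvRing (l : Q.I → K) (α : Q.I → ℕ) :
    Subalgebra K (↥(Q.MomentFiber K l α) → K) :=
  Q.fnRing K α (Q.MomentFiber K l α) ⊓
    relInv K (fun x y : ↥(Q.MomentFiber K l α) =>
      ∃ g : Q.Gl K α, y.1 = Q.glAct K α g x.1)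

/-- Index type for a product `∏_t X_t^{m_t}`. -/
@[reducible] def SymIdx (s : ℕ) (m : Fin s → ℕ) : Type := Σ t : Fin s, Fin (m t)

/-- The product `∏_{t} Rep(Q̄, d_t)^{m_t}` of representation spaces. -/
def SymRep (s : ℕ) (m : Fin s → ℕ) (d : Fin s → (Q.I → ℕ)) : Type :=
  ∀ p : SymIdx s m, Q.Rep K (d p.1)

/-- The product `∏_t μ_{d_t}^{-1}(λ)^{m_t}` of moment map fibres. -/
def SymFiber (s : ℕ) (m : Fin s → ℕ) (d : Fin s → (Q.I → ℕ)) (l : Q.I → K) :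
    Set (Q.SymRep K s m d) :=
  {x | ∀ p : SymIdx s m, x p ∈ Q.MomentFiber K l (d p.1)}

/-- Polynomial functions on the product of fibres. -/
def symFnRing (s : ℕ) (m : Fin s → ℕ) (d : Fin s → (Q.I → ℕ)) (l : Q.I → K) :
    Subalgebra K (↥(Q.SymFiber K s m d l) → K) :=
  (MvPolynomial.aeval
    (fun c : Σ p : SymIdx s m, Q.Coords (d p.1) =>
      fun v : ↥(Q.SymFiber K s m d l) => v.1 c.1 c.2.1 c.2.2.1 c.2.2.2) :
    MvPolynomial (Σ p : SymIdx s m, Q.Coords (d p.1)) K →ₐ[K]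
      (↥(Q.SymFiber K s m d l) → K)).range

/-- The componentwise action of the product of the groups `∏ GL(d_t)^{m_t}`. -/
def symGlAct (s : ℕ) (m : Fin s → ℕ) (d : Fin s → (Q.I → ℕ))
    (g : ∀ p : SymIdx s m, Q.Gl K (d p.1)) (x : Q.SymRep K s m d) :
    Q.SymRep K s m d :=
  fun p => Q.glAct K (d p.1) (g p) (x p)

/-- The action of `∏_t S_{m_t}` permuting the factors of each `X_t^{m_t}`. -/
def symPermAct (s : ℕ) (m : Fin s → ℕ) (d : Fin s → (Q.I → ℕ))
    (π : ∀ t : Fin s, Equiv.Perm (Fin (m t))) (x : Q.SymRep K s m d) :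
    Q.SymRep K s m d :=
  fun p => x ⟨p.1, π p.1 p.2⟩

/-- The coordinate ring of the product of symmetric products
`∏_t S^{m_t} N(λ, d_t)` of Marsden–Weinstein reductions: functions on
`∏_t μ_{d_t}^{-1}(λ)^{m_t}` which are polynomial, invariant under all the groups
`G(d_t)` acting on the separate factors, and symmetric under permutations of the
`m_t` factors of each type `t`. -/
def SymInvRing (s : ℕ) (m : Fin s → ℕ) (d : Fin s → (Q.I → ℕ)) (l : Q.I → K) :
    Subalgebra K (↥(Q.SymFiber K s m d l) → K) :=
  Q.symFnRing K s m d l ⊓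
    relInv K (fun x y : ↥(Q.SymFiber K s m d l) =>
      ∃ g : ∀ p : SymIdx s m, Q.Gl K (d p.1), y.1 = Q.symGlAct K s m d g x.1) ⊓
    relInv K (fun x y : ↥(Q.SymFiber K s m d l) =>
      ∃ π : ∀ t : Fin s, Equiv.Perm (Fin (m t)), y.1 = Q.symPermAct K s m d π x.1)

/-- The trace function `tr_p` of an oriented cycle `p` in `Q̄` :
`tr_p(x) = tr(x_{a_1} ⋯ x_{a_ℓ})`, written out via matrix entries. -/
def cycTr (α : Q.I → ℕ) (p : Q.Cyc) (x : Q.Rep K α) : K :=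
  ∑ c : ∀ i : Fin (p.n + 1), Fin (α (Q.dh (p.ar i))),
    ∏ i : Fin (p.n + 1),
      x (p.ar i) (c i) (Fin.cast (congrArg α (p.compat i)).symm (c (i + 1)))

/-- `U` is a subrepresentation of the `Π^λ`-module given by the point
`x ∈ Rep(Q̄,α)` : a collection of subspaces stable under all the maps `x_a`. -/
def SubRep (α : Q.I → ℕ) (x : Q.Rep K α)
    (U : ∀ i : Q.I, Submodule K (Fin (α i) → K)) : Prop :=
  ∀ a : Q.DA, ∀ v ∈ U (Q.dt a), (x a).mulVec v ∈ U (Q.dh a)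

/-- The module given by `x` has the simple module `S_{i₀}` (dimension vector
`ε_{i₀}`, all arrows acting as zero) as a composition factor: it has a subquotient
of dimension vector `ε_{i₀}` on which all arrows act as zero. -/
def HasSFactor (α : Q.I → ℕ) (i0 : Q.I) (x : Q.Rep K α) : Prop :=
  ∃ U W : ∀ i : Q.I, Submodule K (Fin (α i) → K),
    Q.SubRep K α x U ∧ Q.SubRep K α x W ∧ (∀ i, U i ≤ W i) ∧
    (∀ i, Module.finrank K (W i) =
      Module.finrank K (U i) + (if i = i0 then 1 else 0)) ∧
    (∀ a : Q.DA, Q.dh a = i0 → Q.dt a = i0 →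
      ∀ v ∈ W (Q.dt a), (x a).mulVec v ∈ U (Q.dh a))

/-- `W/U` is a simple subquotient of the module given by `x`; the simple
subquotients of a module are, up to isomorphism, exactly its composition factors. -/
def SimpleSubquot (α : Q.I → ℕ) (x : Q.Rep K α)
    (U W : ∀ i : Q.I, Submodule K (Fin (α i) → K)) : Prop :=
  Q.SubRep K α x U ∧ Q.SubRep K α x W ∧ (∀ i, U i ≤ W i) ∧ U ≠ W ∧
    ∀ V : ∀ i : Q.I, Submodule K (Fin (α i) → K),
      Q.SubRep K α x V → (∀ i, U i ≤ V i) → (∀ i, V i ≤ W i) → V = U ∨ V = W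

/-- The direct sum map `∏_{j=1}^m Rep(Q̄,δ) → Rep(Q̄,mδ)` (block diagonal). -/
def dsMap (δ : Q.I → ℕ) (m : ℕ) (y : Fin m → Q.Rep K δ) :
    Q.Rep K (fun i => m * δ i) :=
  fun a => Matrix.of fun r c =>
    if (finProdFinEquiv.symm r).1 = (finProdFinEquiv.symm c).1 then
      y (finProdFinEquiv.symm r).1 a (finProdFinEquiv.symm r).2
        (finProdFinEquiv.symm c).2
    else 0

end FinQuiver


/-- Sums over injections of products of elements of a multiplicatively closed family lie in the
subalgebra containing all the one-index sums. -/
theorem stmt15_emb_aux {K R : Type} [Field K] [CommRing R] [Algebra K R] (m : ℕ)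
    (A : Subalgebra K R) (M : Submonoid (Fin m → R)) (hM : ∀ v ∈ M, ∑ j, v j ∈ A) (k : ℕ) :
    ∀ v : Fin k → (Fin m → R), (∀ j, v j ∈ M) →
      ∑ e : Fin k ↪ Fin m, ∏ j, v j (e j) ∈ A := by
  classical
  induction k with
  | zero =>
    intro v _
    simp
  | succ k ih =>
    intro v hv
    have key : ∑ e : Fin (k + 1) ↪ Fin m, ∏ j, v j (e j) =
        (∑ e : Fin k ↪ Fin m, ∏ j, v j.succ (e j)) * (∑ a, v 0 a)
        - ∑ l : Fin k, ∑ e : Fin k ↪ Fin m,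
            ∏ j, (Function.update (fun j : Fin k => v j.succ) l (v l.succ * v 0)) j (e j) := by
      rw [← (Equiv.embeddingFinSucc k (Fin m)).symm.sum_comp, Fintype.sum_sigma, Finset.sum_mul,
        Finset.sum_comm, ← Finset.sum_sub_distrib]
      refine Finset.sum_congr rfl fun e _ => ?_
      have h1 : ∀ l : Fin k,
          ∏ j, (Function.update (fun j : Fin k => v j.succ) l (v l.succ * v 0)) j (e j)
            = (∏ j, v j.succ (e j)) * v 0 (e l) := by
        intro l
        rw [← Finset.mul_prod_erase _ _ (Finset.mem_univ l),
          ← Finset.mul_prod_erase Finset.univ (fun j : Fin k => v j.succ (e j))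
            (Finset.mem_univ l), Function.update_self]
        rw [Finset.prod_congr rfl (g := fun j : Fin k => v j.succ (e j))]
        · simp only [Pi.mul_apply]; ring
        · intro x hx
          rw [Function.update_of_ne (Finset.ne_of_mem_erase hx)]
      simp only [h1, ← Finset.mul_sum, ← mul_sub]
      have h2 : ∑ a, v 0 a - ∑ l, v 0 (e l) = ∑ a : {i // i ∉ Set.range e}, v 0 a := by
        have h3 : ∑ l, v 0 (e l) = ∑ a : {i // i ∈ Set.range e}, v 0 a :=
          (Equiv.ofInjective e e.injective).sum_comp (fun a => v 0 a.1)
        rw [h3, sub_eq_iff_eq_add']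
        convert (Fintype.sum_subtype_add_sum_subtype (fun i => i ∈ Set.range e) (v 0)).symm
      rw [h2, Finset.mul_sum]
      refine Finset.sum_congr rfl fun a _ => ?_
      rw [Fin.prod_univ_succ, mul_comm]
      simp [Equiv.embeddingFinSucc]
    rw [key]
    refine A.sub_mem (A.mul_mem (ih _ fun j => hv _) (hM _ (hv 0))) (A.sum_mem fun l _ => ih _ ?_)
    intro j
    by_cases h : j = l
    · subst h
      rw [Function.update_self]
      exact M.mul_mem (hv _) (hv _)
    · rw [Function.update_of_ne h]
      exact hv _

/-- if `S_m` acts on `K[x_{ij} : 1 ≤ i ≤ N, 1 ≤ j ≤ m]` by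
simultaneously permuting the second index, then the ring of invariants is
generated as a `K`-algebra by the power sums
`s_{r_1,…,r_N} = ∑_j x_{1j}^{r_1} ⋯ x_{Nj}^{r_N}`. -/
theorem stmt15 (K : Type) [Field K] [CharZero K] (N m : ℕ)
    (f : MvPolynomial (Fin N × Fin m) K) :
    (∀ σ : Equiv.Perm (Fin m),
        MvPolynomial.rename (fun p : Fin N × Fin m => (p.1, σ p.2)) f = f) ↔
      f ∈ Algebra.adjoin K
        {g : MvPolynomial (Fin N × Fin m) K | ∃ r : Fin N → ℕ,
          g = ∑ j : Fin m, ∏ i : Fin N, (MvPolynomial.X (i, j)) ^ (r i)} := by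
  classical
  set A := Algebra.adjoin K
        {g : MvPolynomial (Fin N × Fin m) K | ∃ r : Fin N → ℕ,
          g = ∑ j : Fin m, ∏ i : Fin N, (MvPolynomial.X (i, j)) ^ (r i)} with hA
  constructor
  · intro hf
    let M : Submonoid (Fin m → MvPolynomial (Fin N × Fin m) K) :=
      { carrier := {v | ∃ r : Fin N → ℕ, v = fun j => ∏ i, (MvPolynomial.X (i, j)) ^ (r i)}
        one_mem' := ⟨0, by ext1 j; simp⟩
        mul_mem' := by
          rintro _ _ ⟨r, rfl⟩ ⟨s, rfl⟩
          refine ⟨r + s, ?_⟩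
          ext1 j
          simp [pow_add, Finset.prod_mul_distrib] }
    have hM : ∀ v ∈ M, ∑ j, v j ∈ A := by
      rintro _ ⟨r, rfl⟩
      exact Algebra.subset_adjoin ⟨r, rfl⟩
    have hmon : ∀ g : MvPolynomial (Fin N × Fin m) K, ∑ σ : Equiv.Perm (Fin m),
        MvPolynomial.rename (fun p : Fin N × Fin m => (p.1, σ p.2)) g ∈ A := by
      intro g
      induction g using MvPolynomial.induction_on' with
      | monomial d c =>
        have h := stmt15_emb_aux m A M hM m
          (fun j k => ∏ i, (MvPolynomial.X (i, k)) ^ (d (i, j))) (fun j => ⟨fun i => d (i, j), rfl⟩)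
        rw [← (Equiv.embeddingEquivOfFinite (Fin m)).symm.sum_comp] at h
        have h' := A.smul_mem h c
        convert h' using 1
        rw [Finset.smul_sum]
        refine Finset.sum_congr rfl fun σ _ => ?_
        rw [MvPolynomial.monomial_eq, Finsupp.prod_fintype _ _ (by simp), map_mul,
          MvPolynomial.rename_C, ← MvPolynomial.smul_eq_C_mul, map_prod,
          Fintype.prod_prod_type_right]
        simp
      | add p q hp hq =>
        simp only [map_add, Finset.sum_add_distrib]
        exact A.add_mem hp hq
    have h := hmon f
    rw [Finset.sum_congr rfl (fun σ _ => hf σ), Finset.sum_const, Finset.card_univ,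
      Fintype.card_perm, Fintype.card_fin, ← Nat.cast_smul_eq_nsmul K] at h
    have h2 := A.smul_mem h ((m.factorial : K)⁻¹)
    rwa [smul_smul, inv_mul_cancel₀ (Nat.cast_ne_zero.mpr m.factorial_ne_zero), one_smul] at h2
  · intro hf σ
    induction hf using Algebra.adjoin_induction with
    | mem x hx =>
      obtain ⟨r, rfl⟩ := hx
      simp only [map_sum, map_prod, map_pow, MvPolynomial.rename_X]
      exact Equiv.sum_comp σ (fun j => ∏ i : Fin N,
        (MvPolynomial.X (i, j) : MvPolynomial (Fin N × Fin m) K) ^ (r i))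
    | algebraMap r => exact MvPolynomial.rename_C _ _
    | add x y _ _ hx hy => rw [map_add, hx, hy]
    | mul x y _ _ hx hy => rw [map_mul, hx, hy]

end
end

section
/- Let Q' be an extended Dynkin quiver with extending vertex k and minimal positive imaginary root δ, and let Q be obtained from Q' by adjoining one new vertex j and one arrow joining j to k; let I be the vertex set of Q (and regard δ ∈ ℕ^I with δ_j = 0). Suppose λ ∈ K^I satisfies λ·δ = 0 and λ_j = 0. If α ∈ Σ_λ with α_j = 1 and mδ − α' ∈ ℕR_λ^+ for some m ≥ 0, where α' = α − α_j ε_j, then α = ε_j. -/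
open scoped BigOperators

noncomputable section

namespace FinQuiver

variable {Q : FinQuiver}

theorem bil_eq (x y : Q.I → ℤ) : Q.bil x y =
    (∑ i, 2 * x i * y i) - ∑ a : Q.A, (x (Q.h a) * y (Q.t a) + x (Q.t a) * y (Q.h a)) := by
  unfold bil
  rw [Finset.sum_add_distrib]
  congr 1
  exact Fintype.sum_sum_type _

theorem bil_comm (x y : Q.I → ℤ) : Q.bil x y = Q.bil y x := by
  rw [bil_eq, bil_eq]
  congr 1
  · exact Finset.sum_congr rfl fun i _ => by ring
  · exact Finset.sum_congr rfl fun i _ => by ring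

theorem bil_add_left (x y z : Q.I → ℤ) : Q.bil (x + y) z = Q.bil x z + Q.bil y z := by
  simp only [bil_eq, Pi.add_apply, mul_add, add_mul, Finset.sum_add_distrib]
  ring

theorem bil_smul_left (c : ℤ) (x z : Q.I → ℤ) : Q.bil (c • x) z = c * Q.bil x z := by
  simp only [bil_eq, Pi.smul_apply, smul_eq_mul, mul_sub, Finset.mul_sum]
  congr 1
  · exact Finset.sum_congr rfl fun i _ => by ring
  · exact Finset.sum_congr rfl fun i _ => by ring

theorem bil_neg_left (x z : Q.I → ℤ) : Q.bil (-x) z = - Q.bil x z := by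
  have := bil_smul_left (-1) x z
  simpa using this

theorem bil_sub_left (x y z : Q.I → ℤ) : Q.bil (x - y) z = Q.bil x z - Q.bil y z := by
  rw [sub_eq_add_neg, bil_add_left, bil_neg_left]; ring

theorem bil_add_right (x y z : Q.I → ℤ) : Q.bil z (x + y) = Q.bil z x + Q.bil z y := by
  rw [bil_comm, bil_add_left, bil_comm x, bil_comm y]

theorem bil_smul_right (c : ℤ) (x z : Q.I → ℤ) : Q.bil z (c • x) = c * Q.bil z x := by
  rw [bil_comm, bil_smul_left, bil_comm x]

theorem bil_neg_right (x z : Q.I → ℤ) : Q.bil z (-x) = - Q.bil z x := by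
  rw [bil_comm, bil_neg_left, bil_comm x]

theorem bil_sub_right (x y z : Q.I → ℤ) : Q.bil z (x - y) = Q.bil z x - Q.bil z y := by
  rw [bil_comm, bil_sub_left, bil_comm x, bil_comm y]

theorem bil_zero_left (z : Q.I → ℤ) : Q.bil 0 z = 0 := by simp [bil_eq]

theorem bil_sum_left {ι : Type} (s : Finset ι) (f : ι → Q.I → ℤ) (z : Q.I → ℤ) :
    Q.bil (∑ t ∈ s, f t) z = ∑ t ∈ s, Q.bil (f t) z := by
  classical
  induction s using Finset.induction_on with
  | empty => simp [bil_zero_left]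
  | insert a s ha ih => rw [Finset.sum_insert ha, Finset.sum_insert ha, bil_add_left, ih]

theorem eq_sum_ev (x : Q.I → ℤ) : x = ∑ i, x i • Q.ev i := by
  ext t
  simp [ev]

theorem bil_expand (x y : Q.I → ℤ) : Q.bil x y = ∑ i, y i * Q.bil x (Q.ev i) := by
  conv_lhs => rw [bil_comm, eq_sum_ev y, bil_sum_left]
  exact Finset.sum_congr rfl fun i _ => by rw [bil_smul_left, bil_comm]

theorem two_pp (x : Q.I → ℤ) : 2 * Q.pp x = 2 - Q.bil x x := by
  rw [bil_eq, pp, mul_add, mul_sub, Finset.mul_sum, Finset.mul_sum]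
  have h1 : ∑ i, 2 * (x i * x i) = ∑ i, 2 * x i * x i :=
    Finset.sum_congr rfl fun i _ => by ring
  have h2 : ∑ a : Q.A, 2 * (x (Q.t a) * x (Q.h a)) =
      ∑ a : Q.A, (x (Q.h a) * x (Q.t a) + x (Q.t a) * x (Q.h a)) :=
    Finset.sum_congr rfl fun i _ => by ring
  rw [h1, h2]; ring

theorem bil_ev_self (i : Q.I) : Q.bil (Q.ev i) (Q.ev i) =
    2 - ∑ a : Q.A, (if Q.h a = i ∧ Q.t a = i then 2 else 0) := by
  rw [bil_eq]
  congr 1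
  · simp [ev]
  · refine Finset.sum_congr rfl fun a _ => ?_
    by_cases h1 : Q.h a = i <;> by_cases h2 : Q.t a = i <;> simp [ev, h1, h2]

theorem bil_ev_loopfree {i : Q.I} (hi : Q.Loopfree i) : Q.bil (Q.ev i) (Q.ev i) = 2 := by
  rw [bil_ev_self, Finset.sum_eq_zero]
  · simp
  · intro a _
    rw [if_neg (hi a)]

theorem bil_ev_loop {i : Q.I} (hi : ¬ Q.Loopfree i) : Q.bil (Q.ev i) (Q.ev i) ≤ 0 := by
  unfold Loopfree at hi
  push Not at hi
  obtain ⟨a, ha⟩ := hi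
  rw [bil_ev_self]
  have := Finset.single_le_sum (f := fun a : Q.A => (if Q.h a = i ∧ Q.t a = i then (2:ℤ) else 0))
    (fun a _ => by split_ifs <;> norm_num) (Finset.mem_univ a)
  simp only [ha, and_self, if_true] at this
  linarith

theorem bil_disjoint {y z : Q.I → ℤ} (hy : ∀ i, 0 ≤ y i) (hz : ∀ i, 0 ≤ z i)
    (h : ∀ i, y i * z i = 0) : Q.bil y z ≤ 0 := by
  rw [bil_eq]
  have h1 : ∑ i, 2 * y i * z i = 0 :=
    Finset.sum_eq_zero fun i _ => by rw [mul_assoc, h i, mul_zero]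
  have h2 : 0 ≤ ∑ a : Q.A, (y (Q.h a) * z (Q.t a) + y (Q.t a) * z (Q.h a)) :=
    Finset.sum_nonneg fun a _ => add_nonneg (mul_nonneg (hy _) (hz _)) (mul_nonneg (hy _) (hz _))
  linarith

theorem bil_refl_refl {β : Q.I → ℤ} (hβ : Q.bil β β = 2) (x y : Q.I → ℤ) :
    Q.bil (x - Q.bil x β • β) (y - Q.bil y β • β) = Q.bil x y := by
  simp only [bil_sub_left, bil_sub_right, bil_smul_left, bil_smul_right, hβ, bil_comm β]
  ring

theorem root_le_two {x : Q.I → ℤ} (hx : Q.IsRoot x) : Q.bil x x ≤ 2 := by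
  have key : ∀ x : Q.I → ℤ, Q.InFund x → Q.bil x x ≤ 2 := by
    intro x hx
    have : Q.bil x x ≤ 0 := by
      rw [bil_expand]
      exact Finset.sum_nonpos fun i _ => mul_nonpos_of_nonneg_of_nonpos (hx.2.1 i) (hx.2.2.2 i)
    linarith
  induction hx with
  | simple i hi => exact (bil_ev_loopfree hi).le
  | fund x hx => exact key x hx
  | neg_fund x hx => rw [bil_neg_left, bil_neg_right, neg_neg]; exact key x hx
  | reflect i hi x hx ih => unfold refl; rw [bil_refl_refl (bil_ev_loopfree hi)]; exact ih

/-- The minuscule argument. -/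
theorem minuscule (R : Set (Q.I → ℤ)) (hR2 : ∀ β ∈ R, Q.bil β β = 2)
    (hRr : ∀ β ∈ R, ∀ x ∈ R, x - Q.bil x β • β ∈ R) :
    ∀ (n : ℕ) (L : List (Q.I → ℤ)), L.length = n → (∀ β ∈ L, β ∈ R) →
      (∀ β ∈ R, |Q.bil L.sum β| ≤ 1) → Q.bil L.sum L.sum ≤ 0 := by
  intro n
  induction n with
  | zero =>
    intro L hL _ _
    rw [List.length_eq_zero_iff] at hL
    subst hL
    simp [bil_zero_left]
  | succ n ih =>
    intro L hL hLR hb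
    by_cases hex : ∃ β ∈ L, 0 < Q.bil L.sum β
    · obtain ⟨β, hβL, hβ⟩ := hex
      have hβ1 : Q.bil L.sum β = 1 := by
        have := (abs_le.1 (hb β (hLR β hβL))).2
        omega
      have hperm := List.perm_cons_erase hβL
      have hsum : L.sum = β + (L.erase β).sum := by rw [hperm.sum_eq, List.sum_cons]
      have hv : (L.erase β).sum = L.sum - Q.bil L.sum β • β := by
        rw [hβ1, one_smul, hsum]; simp
      have hlen : (L.erase β).length = n := by
        rw [List.length_erase_of_mem hβL, hL]; rfl
      have := ih (L.erase β) hlen (fun x hx => hLR x (List.mem_of_mem_erase hx)) (by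
        intro x hx
        have hβR := hLR β hβL
        have e : Q.bil (L.sum - Q.bil L.sum β • β) x =
            Q.bil L.sum (x - Q.bil x β • β) := by
          simp only [bil_sub_left, bil_sub_right, bil_smul_left, bil_smul_right, bil_comm β x]
          ring
        rw [hv, e]
        exact hb _ (hRr β hβR x hx))
      rw [hv, bil_refl_refl (hR2 β (hLR β hβL))] at this
      exact this
    · push Not at hex
      have : ∀ M : List (Q.I → ℤ), (∀ β ∈ M, Q.bil L.sum β ≤ 0) → Q.bil L.sum M.sum ≤ 0 := by
        intro M
        induction M with
        | nil => intro _; rw [bil_comm]; simp [bil_zero_left]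
        | cons a M ihM =>
          intro h
          rw [List.sum_cons, bil_add_right]
          have h1 := h a (by simp)
          have h2 := ihM fun β hβ => h β (by simp [hβ])
          linarith
      exact this L hex

theorem exists_list_of_closure (R : Set (Q.I → ℤ)) (hneg : ∀ β ∈ R, -β ∈ R) {x : Q.I → ℤ}
    (hx : x ∈ AddSubgroup.closure R) : ∃ L : List (Q.I → ℤ), (∀ β ∈ L, β ∈ R) ∧ L.sum = x := by
  induction hx using AddSubgroup.closure_induction with
  | mem x hx => exact ⟨[x], by simpa using hx, by simp⟩
  | zero => exact ⟨[], by simp, rfl⟩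
  | add x y _ _ ihx ihy =>
    obtain ⟨L, h1, h2⟩ := ihx
    obtain ⟨M, h3, h4⟩ := ihy
    refine ⟨L ++ M, fun β hβ => ?_, by rw [List.sum_append, h2, h4]⟩
    rcases List.mem_append.1 hβ with h | h
    · exact h1 β h
    · exact h3 β h
  | neg x _ ih =>
    obtain ⟨L, h1, h2⟩ := ih
    refine ⟨L.map Neg.neg, fun β hβ => ?_, ?_⟩
    · obtain ⟨y, hy, rfl⟩ := List.mem_map.1 hβ
      exact hneg y (h1 y hy)
    · rw [← h2]
      clear h1 h2
      induction L with
      | nil => simp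
      | cons a L ihL => simp only [List.map_cons, List.sum_cons, ihL, neg_add]

/-- The facts that are used about the quiver. -/
structure Setup (Q : FinQuiver) (j k : Q.I) (δ : Q.I → ℤ) : Prop where
  semi : ∀ x : Q.I → ℤ, x j = 0 → 0 ≤ Q.bil x x
  dnn : ∀ i, 0 ≤ δ i
  dj : δ j = 0
  dk : δ k = 1
  drad : ∀ x : Q.I → ℤ, x j = 0 → Q.bil δ x = 0
  dmin : ∀ x : Q.I → ℤ, (∀ i, 0 ≤ x i) → x j = 0 → (∀ y : Q.I → ℤ, y j = 0 → Q.bil x y = 0) →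
    x ≠ 0 → ∀ i, δ i ≤ x i
  dpos : ∀ i, i ≠ j → 0 < δ i
  jx : ∀ x : Q.I → ℤ, Q.bil (Q.ev j) x = 2 * x j - x k
  lfj : Q.Loopfree j
  conn : Q.SuppConnected δ
  jk : j ≠ k

namespace Setup

variable {j k : Q.I} {δ : Q.I → ℤ}

theorem iso_rad (S : Setup Q j k δ) {x y : Q.I → ℤ} (hx : x j = 0) (hy : y j = 0) (h : Q.bil x x = 0) :
    Q.bil x y = 0 := by
  by_contra hc
  have h0 := S.semi y hy
  have h1 := S.semi (y + (-(Q.bil x y) * (Q.bil y y + 1)) • x) (by simp [hx, hy])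
  simp only [bil_add_left, bil_add_right, bil_smul_left, bil_smul_right, h, bil_comm y x] at h1
  have : 0 < Q.bil x y ^ 2 := by positivity
  nlinarith

/-- radical vectors with zero `k`-component vanish -/
theorem rad_zero_nonneg (S : Setup Q j k δ) {x : Q.I → ℤ} (hx : x j = 0) (hk : x k = 0) (hn : ∀ i, 0 ≤ x i)
    (h : Q.bil x x = 0) : x = 0 := by
  by_contra hc
  have := S.dmin x hn hx (fun y hy => S.iso_rad hx hy h) hc k
  rw [S.dk, hk] at this
  omega

theorem parts (x : Q.I → ℤ) : ∃ y z : Q.I → ℤ, x = y - z ∧ (∀ i, 0 ≤ y i) ∧ (∀ i, 0 ≤ z i) ∧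
    (∀ i, y i * z i = 0) := by
  refine ⟨fun i => max (x i) 0, fun i => max (-x i) 0, ?_, fun i => le_max_right _ _,
    fun i => le_max_right _ _, fun i => ?_⟩
  · ext i
    simp only [Pi.sub_apply]
    omega
  · rcases le_total (x i) 0 with h | h
    · simp [h]
    · simp [h]

theorem zero_of_parts {y z : Q.I → ℤ} {i : Q.I} (h : y i * z i = 0) (h2 : y i - z i = 0) :
    y i = 0 ∧ z i = 0 := by
  have e : y i = z i := by omega
  rw [e] at h
  have : z i = 0 := by simpa using h
  omega

theorem rad_zero (S : Setup Q j k δ) {x : Q.I → ℤ} (hx : x j = 0) (hk : x k = 0)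
    (h : Q.bil x x = 0) : x = 0 := by
  obtain ⟨y, z, rfl, hy, hz, hyz⟩ := parts x
  obtain ⟨hyj, hzj⟩ := zero_of_parts (hyz j) hx
  obtain ⟨hyk, hzk⟩ := zero_of_parts (hyz k) hk
  have h1 := S.semi y hyj
  have h2 := S.semi z hzj
  have h3 := bil_disjoint hy hz hyz
  simp only [bil_sub_left, bil_sub_right, bil_comm z y] at h
  rw [S.rad_zero_nonneg hyj hyk hy (by linarith), S.rad_zero_nonneg hzj hzk hz (by linarith),
    sub_zero]

theorem even (x : Q.I → ℤ) : ∃ c, Q.bil x x = 2 * c := ⟨1 - Q.pp x, by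
  have := two_pp x; linarith⟩

/-- sign lemma -/
theorem sign (S : Setup Q j k δ) {x : Q.I → ℤ} (hx : x j = 0) (h : Q.bil x x = 2) :
    (∀ i, 0 ≤ x i) ∨ (∀ i, x i ≤ 0) := by
  have aux : ∀ y z : Q.I → ℤ, (∀ i, 0 ≤ y i) → (∀ i, 0 ≤ z i) → (∀ i, y i * z i = 0) →
      y j = 0 → z j = 0 → Q.bil z z = 0 → y = 0 ∨ z = 0 := by
    intro y z hy hz hyz hyj hzj h0
    by_cases hz0 : z = 0
    · exact Or.inr hz0
    · left
      have := S.dmin z hz hzj (fun w hw => S.iso_rad hzj hw h0) hz0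
      ext i
      by_cases hi : i = j
      · rw [hi, hyj]; rfl
      · have h1 := S.dpos i hi
        have h2 := this i
        rcases mul_eq_zero.1 (hyz i) with h3 | h3
        · exact h3
        · omega
  obtain ⟨y, z, rfl, hy, hz, hyz⟩ := parts x
  obtain ⟨hyj, hzj⟩ := zero_of_parts (hyz j) hx
  have h1 := S.semi y hyj
  have h2 := S.semi z hzj
  have h3 := bil_disjoint hy hz hyz
  simp only [bil_sub_left, bil_sub_right, bil_comm z y] at h
  obtain ⟨c, hc⟩ := even y
  obtain ⟨d, hd⟩ := even z
  have : Q.bil y y = 0 ∨ Q.bil z z = 0 := by omega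
  have h4 : y = 0 ∨ z = 0 := by
    rcases this with h0 | h0
    · exact (aux z y hz hy (fun i => by rw [mul_comm, hyz]) hzj hyj h0).symm
    · exact aux y z hy hz hyz hyj hzj h0
  rcases h4 with h4 | h4
  · right; intro i; simp [h4, hz i]
  · left; intro i; simp [h4, hy i]

theorem delta_self (S : Setup Q j k δ) : Q.bil δ δ = 0 := S.drad δ S.dj

theorem add_delta_nonneg (S : Setup Q j k δ) {β : Q.I → ℤ} (hj : β j = 0) (hk : β k = 0) (h : Q.bil β β = 2) :
    ∀ i, 0 ≤ (β + δ) i := by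
  have hd := S.drad β hj
  rcases S.sign (x := β + δ) (by simp [hj, S.dj]) (by
    simp only [bil_add_left, bil_add_right, bil_comm β δ, hd, S.delta_self, h]; norm_num) with h | h
  · exact h
  · have := h k
    simp [hk, S.dk] at this

theorem loop_rad (S : Setup Q j k δ) {i : Q.I} (hi : i ≠ j) (hl : ¬ Q.Loopfree i) (x : Q.I → ℤ) (hx : x j = 0) :
    Q.bil (Q.ev i) x = 0 := by
  have hij : Q.ev i j = 0 := by simp [ev, hi.symm]
  exact S.iso_rad hij hx (le_antisymm (bil_ev_loop hl) (S.semi _ hij))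

theorem root_refl_ev {i : Q.I} (hi : Q.Loopfree i) {x : Q.I → ℤ} (hx : Q.IsRoot x) :
    Q.IsRoot (x - Q.bil x (Q.ev i) • Q.ev i) := IsRoot.reflect i hi x hx

theorem real_root (S : Setup Q j k δ) : ∀ (n : ℕ) (β : Q.I → ℤ), (∀ i, 0 ≤ β i) → β j = 0 → Q.bil β β = 2 →
    ∑ i, β i = n → Q.IsRoot β ∧ ∀ x, Q.IsRoot x → Q.IsRoot (x - Q.bil x β • β) := by
  intro n
  induction n using Nat.strong_induction_on with
  | _ n ih =>
    intro β hβ hβj hβ2 hsum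
    have hex : ∃ i, 0 < β i ∧ 0 < Q.bil β (Q.ev i) := by
      by_contra hcon
      push Not at hcon
      have : Q.bil β β ≤ 0 := by
        rw [bil_expand]
        refine Finset.sum_nonpos fun i _ => ?_
        rcases (hβ i).eq_or_lt with h | h
        · rw [← h, zero_mul]
        · exact mul_nonpos_of_nonneg_of_nonpos (hβ i) (hcon i h)
      omega
    obtain ⟨i, hi0, hi1⟩ := hex
    have hij : i ≠ j := by rintro rfl; omega
    have hlf : Q.Loopfree i := by
      by_contra hl
      have := S.loop_rad hij hl β hβj
      rw [bil_comm] at this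
      omega
    have hii := bil_ev_loopfree hlf
    set c := Q.bil β (Q.ev i) with hc
    have hevj : Q.ev i j = 0 := by simp [ev, hij.symm]
    by_cases hnn : ∀ t, 0 ≤ (β - c • Q.ev i) t
    · have hs2 : Q.bil (β - c • Q.ev i) (β - c • Q.ev i) = 2 := by
        rw [hc, bil_refl_refl hii, hβ2]
      have hss : ∑ t, (β - c • Q.ev i) t = n - c := by
        simp [ev, Finset.sum_sub_distrib, hsum]
      have hss0 : 0 ≤ ∑ t, (β - c • Q.ev i) t := Finset.sum_nonneg fun t _ => hnn t
      obtain ⟨r1, r2⟩ := ih (n - c).toNat (by omega) (β - c • Q.ev i) hnn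
        (by simp [hβj, hevj]) hs2 (by omega)
      have e0 : Q.bil (β - c • Q.ev i) (Q.ev i) = -c := by
        rw [bil_sub_left, bil_smul_left, hii, ← hc]; ring
      constructor
      · have := root_refl_ev hlf r1
        rw [e0] at this
        convert this using 1
        module
      · intro x hx
        have h1 := root_refl_ev hlf (r2 _ (root_refl_ev hlf hx))
        convert h1 using 1
        have hic : Q.bil (Q.ev i) β = c := by rw [bil_comm]
        simp only [bil_sub_left, bil_sub_right, bil_smul_left, bil_smul_right, hii, hic, ← hc]
        ext t
        simp only [Pi.sub_apply, Pi.smul_apply, smul_eq_mul]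
        ring
    · have hs2 : Q.bil (β - c • Q.ev i) (β - c • Q.ev i) = 2 := by
        rw [hc, bil_refl_refl hii, hβ2]
      have hle := (S.sign (by simp [hβj, hevj]) hs2).resolve_left hnn
      have hβe : β = β i • Q.ev i := by
        ext t
        by_cases ht : t = i
        · subst ht; simp [ev]
        · have h1 := hle t
          have h2 := hβ t
          simp [ev, ht] at h1 ⊢
          omega
      have h1 : β i = 1 := by
        rw [hβe, bil_smul_left, bil_smul_right, hii] at hβ2
        have : β i * β i = 1 := by linarith
        nlinarith
      rw [h1, one_smul] at hβe
      rw [hβe]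
      exact ⟨IsRoot.simple i hlf, fun x hx => root_refl_ev hlf hx⟩

theorem real_root' (S : Setup Q j k δ) {β : Q.I → ℤ} (h : ∀ i, 0 ≤ β i) (hj : β j = 0) (h2 : Q.bil β β = 2) :
    Q.IsRoot β ∧ ∀ x, Q.IsRoot x → Q.IsRoot (x - Q.bil x β • β) :=
  S.real_root (∑ i, β i).toNat β h hj h2 (by
    have : 0 ≤ ∑ i, β i := Finset.sum_nonneg fun i _ => h i
    omega)

theorem delta_root (S : Setup Q j k δ) : Q.IsRoot δ := by
  refine IsRoot.fund δ ⟨?_, S.dnn, S.conn, fun i => ?_⟩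
  · intro h
    have := S.dk
    rw [h] at this
    simp at this
  · by_cases hi : i = j
    · rw [hi, bil_comm, S.jx, S.dj, S.dk]; norm_num
    · rw [S.drad _ (by simp [ev, Ne.symm hi])]

/-- Roots of the finite root system. -/
theorem closure_all (S : Setup Q j k δ) {x : Q.I → ℤ} (hj : x j = 0) (hk : x k = 0) :
    x ∈ AddSubgroup.closure {β : Q.I → ℤ | β j = 0 ∧ β k = 0 ∧ Q.bil β β = 2} := by
  rw [eq_sum_ev x]
  refine AddSubgroup.sum_mem _ fun i _ => ?_
  by_cases hij : i = j
  · rw [hij, hj, zero_smul]; exact zero_mem _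
  by_cases hik : i = k
  · rw [hik, hk, zero_smul]; exact zero_mem _
  refine AddSubgroup.zsmul_mem _ (AddSubgroup.subset_closure ?_) _
  refine ⟨by simp [ev, Ne.symm hij], by simp [ev, Ne.symm hik], bil_ev_loopfree ?_⟩
  by_contra hl
  have h0 := S.loop_rad hij hl (Q.ev i) (by simp [ev, Ne.symm hij])
  have := S.rad_zero (by simp [ev, Ne.symm hij]) (by simp [ev, Ne.symm hik]) h0
  have h1 := congrFun this i
  simp [ev] at h1

theorem minuscule_zero (S : Setup Q j k δ) (R : Set (Q.I → ℤ))
    (hR : ∀ β ∈ R, β j = 0 ∧ β k = 0 ∧ Q.bil β β = 2)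
    (hneg : ∀ β ∈ R, -β ∈ R)
    (hRr : ∀ β ∈ R, ∀ x ∈ R, x - Q.bil x β • β ∈ R)
    {x : Q.I → ℤ} (hj : x j = 0) (hk : x k = 0) (hx : x ∈ AddSubgroup.closure R)
    (hb : ∀ β ∈ R, Q.bil x β ≤ 1) : x = 0 := by
  obtain ⟨L, hL, rfl⟩ := exists_list_of_closure R hneg hx
  have := minuscule R (fun β h => (hR β h).2.2) hRr L.length L rfl hL (fun β hβ => by
    have h1 := hb β hβ
    have h2 := hb _ (hneg β hβ)
    rw [bil_neg_right] at h2
    rw [abs_le]; constructor <;> linarith)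
  exact S.rad_zero hj hk (le_antisymm this (S.semi _ hj))

theorem pos_aux (S : Setup Q j k δ) : ∀ (r : ℕ) (x : Q.I → ℤ), x j = 0 → x k = 0 → Q.bil x x ≤ 2 * r →
    ∀ i, 0 ≤ x i + r * δ i := by
  intro r
  induction r with
  | zero =>
    intro x hj hk h i
    rw [S.rad_zero hj hk (le_antisymm (by simpa using h) (S.semi x hj))]
    simp
  | succ r ih =>
    intro x hj hk h i
    by_cases hx : x = 0
    · rw [hx]
      have := S.dnn i
      simp only [Pi.zero_apply]
      positivity
    have hex : ∃ β : Q.I → ℤ, (β j = 0 ∧ β k = 0 ∧ Q.bil β β = 2) ∧ 2 ≤ Q.bil x β := by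
      by_contra hcon
      push Not at hcon
      refine hx (S.minuscule_zero {β : Q.I → ℤ | β j = 0 ∧ β k = 0 ∧ Q.bil β β = 2}
        (fun β h => h) ?_ ?_ hj hk (S.closure_all hj hk) ?_)
      · rintro β ⟨h1, h2, h3⟩
        refine ⟨by simp [h1], by simp [h2], by rw [bil_neg_left, bil_neg_right, h3]; rfl⟩
      · rintro β ⟨h1, h2, h3⟩ y ⟨g1, g2, g3⟩
        refine ⟨by simp [h1, g1], by simp [h2, g2], by rw [bil_refl_refl h3, g3]⟩
      · intro β hβ
        have := hcon β hβ
        omega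
    obtain ⟨β, ⟨h1, h2, h3⟩, h4⟩ := hex
    have h5 := ih (x - β) (by simp [hj, h1]) (by simp [hk, h2]) (by
      simp only [bil_sub_left, bil_sub_right, bil_comm β x, h3]
      push_cast at h
      linarith) i
    have h6 := S.add_delta_nonneg h1 h2 h3 i
    simp only [Pi.sub_apply, Pi.add_apply] at h5 h6
    push_cast
    linarith

/-- Vectors with `j`-component `1` and `q ≤ 1` are nonnegative. -/
theorem pos_of_root (S : Setup Q j k δ) {x : Q.I → ℤ} (hj : x j = 1) (h : Q.bil x x ≤ 2) : ∀ i, 0 ≤ x i := by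
  have hjj : Q.ev j j = 1 := by simp [ev]
  have hjk : Q.ev j k = 0 := by simp [ev, S.jk.symm]
  set y := x - Q.ev j - x k • δ with hy
  have hyj : y j = 0 := by simp [hy, hj, hjj, S.dj]
  have hyk : y k = 0 := by simp [hy, hjk, S.dk]
  have hxy : x = y + Q.ev j + x k • δ := by rw [hy]; module
  have hdj : Q.bil δ (Q.ev j) = -1 := by rw [bil_comm, S.jx, S.dj, S.dk]; norm_num
  have e : Q.bil x x = Q.bil y y + 2 - 2 * x k := by
    conv_lhs => rw [hxy]
    simp only [bil_add_left, bil_add_right, bil_smul_left, bil_smul_right, S.delta_self,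
      bil_comm y δ, S.drad y hyj, hdj, bil_comm y (Q.ev j), S.jx, hyj, hyk,
      hjj, hjk, S.dj, S.dk]
    ring
  have h0 := S.semi y hyj
  have hr : 0 ≤ x k := by linarith
  intro i
  have := S.pos_aux (x k).toNat y hyj hyk (by rw [Int.toNat_of_nonneg hr]; linarith) i
  rw [Int.toNat_of_nonneg hr] at this
  by_cases hi : i = j
  · rw [hi, hj]; norm_num
  · have h2 : Q.ev j i = 0 := by simp [ev, hi]
    have h3 := congrFun hxy i
    simp only [Pi.add_apply, Pi.smul_apply, smul_eq_mul, h2] at h3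
    linarith

end Setup

theorem pair_add (K : Type) [Field K] (l : Q.I → K) (x y : Q.I → ℤ) :
    Q.pair K l (x + y) = Q.pair K l x + Q.pair K l y := by
  simp [pair, mul_add, Finset.sum_add_distrib]

theorem pair_smul (K : Type) [Field K] (l : Q.I → K) (c : ℤ) (y : Q.I → ℤ) :
    Q.pair K l (c • y) = c * Q.pair K l y := by
  simp only [pair, Pi.smul_apply, smul_eq_mul, Int.cast_mul, Finset.mul_sum]
  exact Finset.sum_congr rfl fun i _ => by ring

theorem pair_neg (K : Type) [Field K] (l : Q.I → K) (y : Q.I → ℤ) :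
    Q.pair K l (-y) = - Q.pair K l y := by
  have := pair_smul K l (-1) y
  simpa using this

theorem pair_sub (K : Type) [Field K] (l : Q.I → K) (x y : Q.I → ℤ) :
    Q.pair K l (x - y) = Q.pair K l x - Q.pair K l y := by
  rw [sub_eq_add_neg, pair_add, pair_neg, sub_eq_add_neg]

/-- An element of `Σ_λ` is not of the form `x + c β` with `p(α) ≤ p(x) + c p(β)`. -/
theorem sigma_split (K : Type) [Field K] {l : Q.I → K} {α x β : Q.I → ℤ}
    (hα : α ∈ Q.SigmaSet K l) (hx : x ∈ Q.Rplus K l) (hβ : β ∈ Q.Rplus K l) (c : ℤ) (hc : 0 < c)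
    (h : α = x + c • β) : Q.pp x + c * Q.pp β < Q.pp α := by
  obtain ⟨n, rfl⟩ := Int.eq_ofNat_of_zero_le hc.le
  have := hα.2 (n + 1) (Fin.cons x fun _ => β) (by omega) (by
    intro t
    refine Fin.cases ?_ (fun t => ?_) t
    · simpa using hx
    · simpa using hβ) (by
      rw [Fin.sum_univ_succ]
      simp [h])
  rw [Fin.sum_univ_succ] at this
  simpa using this

theorem Setup.main {j k : Q.I} {δ : Q.I → ℤ} (S : Setup Q j k δ) (K : Type) [Field K]
    (l : Q.I → K) (α : Q.I → ℤ) (m : ℕ)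
    (hlδ : Q.pair K l δ = 0) (hlj : l j = 0)
    (hα : α ∈ Q.SigmaSet K l) (hαj : α j = 1)
    (hrem : m • δ - (α - α j • Q.ev j) ∈ Q.NRplus K l) :
    α = Q.ev j := by
  have hjj : Q.ev j j = 1 := by simp [ev]
  have hjk : Q.ev j k = 0 := by simp [ev, S.jk.symm]
  have hdj : Q.bil δ (Q.ev j) = -1 := by rw [bil_comm, S.jx, S.dj, S.dk]; norm_num
  have hα2 : Q.bil α α ≤ 2 := root_le_two hα.1.1.1
  rw [hαj, one_smul] at hrem
  -- the key inequality
  have key : ∀ β : Q.I → ℤ, (∀ i, 0 ≤ β i) → β j = 0 → Q.bil β β = 2 → Q.pair K l β = 0 →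
      Q.bil α β ≤ 0 := by
    intro β hβ hβj hβ2 hlβ
    by_contra hc
    push Not at hc
    obtain ⟨r1, r2⟩ := S.real_root' hβ hβj hβ2
    have hx2 : Q.bil (α - Q.bil α β • β) (α - Q.bil α β • β) = Q.bil α α := bil_refl_refl hβ2 _ _
    have hxj : (α - Q.bil α β • β) j = 1 := by simp [hαj, hβj]
    have hx : α - Q.bil α β • β ∈ Q.Rplus K l := by
      refine ⟨⟨r2 α hα.1.1.1, S.pos_of_root hxj (by rw [hx2]; exact hα2), ?_⟩, ?_⟩
      · intro h
        rw [h] at hxj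
        simp at hxj
      · rw [pair_sub, pair_smul, hlβ, hα.1.2]; simp
    have hβR : β ∈ Q.Rplus K l := by
      refine ⟨⟨r1, hβ, ?_⟩, hlβ⟩
      rintro rfl
      rw [bil_zero_left] at hβ2
      norm_num at hβ2
    have := sigma_split K hα hx hβR _ hc (by module)
    have e1 := two_pp (α - Q.bil α β • β)
    have e2 := two_pp α
    have e3 := two_pp β
    have e4 : Q.pp β = 0 := by linarith
    rw [e4, mul_zero] at this
    rw [hx2] at e1
    linarith
  set γ := α - Q.ev j - α k • δ with hγ
  have hγj : γ j = 0 := by simp [hγ, hαj, hjj, S.dj]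
  have hγk : γ k = 0 := by simp [hγ, hjk, S.dk]
  set R : Set (Q.I → ℤ) :=
    {β | (β j = 0 ∧ β k = 0 ∧ Q.bil β β = 2) ∧ Q.pair K l β = 0} with hR
  -- γ lies in the lattice spanned by R
  have hcl : γ ∈ AddSubgroup.closure R := by
    have hx : ∀ x ∈ AddSubmonoid.closure (Q.Rplus K l), (∀ i, 0 ≤ x i) ∧
        (x j = 0 → x - x k • δ ∈ AddSubgroup.closure R) := by
      intro x hx
      induction hx using AddSubmonoid.closure_induction with
      | mem x hx =>
        refine ⟨hx.1.2.1, fun hj => ?_⟩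
        have h2 := root_le_two hx.1.1
        have h0 := S.semi x hj
        obtain ⟨c, hc⟩ := Setup.even x
        have e : Q.bil (x - x k • δ) (x - x k • δ) = Q.bil x x := by
          simp only [bil_sub_left, bil_sub_right, bil_smul_left, bil_smul_right, S.delta_self,
            bil_comm x δ, S.drad x hj]
          ring
        have hj' : (x - x k • δ) j = 0 := by simp [hj, S.dj]
        have hk' : (x - x k • δ) k = 0 := by simp [S.dk]
        have : Q.bil x x = 0 ∨ Q.bil x x = 2 := by omega
        rcases this with h | h
        · rw [S.rad_zero hj' hk' (by rw [e, h])]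
          exact zero_mem _
        · refine AddSubgroup.subset_closure ⟨⟨hj', hk', by rw [e, h]⟩, ?_⟩
          rw [pair_sub, pair_smul, hlδ, hx.2]; simp
      | zero => exact ⟨fun i => le_rfl, fun _ => by simp⟩
      | add x y _ _ ihx ihy =>
        refine ⟨fun i => add_nonneg (ihx.1 i) (ihy.1 i), fun hj => ?_⟩
        have h1 := ihx.1 j
        have h2 := ihy.1 j
        simp only [Pi.add_apply] at hj
        have := add_mem (ihx.2 (by omega)) (ihy.2 (by omega))
        convert this using 1
        simp only [Pi.add_apply]
        module
    have h := (hx _ hrem).2 (by simp [S.dj, hαj, hjj])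
    rw [← neg_mem_iff]
    convert h using 1
    rw [hγ]
    ext i
    simp [hjk, S.dk]
    ring
  have hγ0 : γ = 0 := by
    refine S.minuscule_zero R (fun β h => h.1) ?_ ?_ hγj hγk hcl ?_
    · rintro β ⟨⟨h1, h2, h3⟩, h4⟩
      exact ⟨⟨by simp [h1], by simp [h2], by rw [bil_neg_left, bil_neg_right, h3]; rfl⟩,
        by rw [pair_neg, h4, neg_zero]⟩
    · rintro β ⟨⟨h1, h2, h3⟩, h4⟩ y ⟨⟨g1, g2, g3⟩, g4⟩
      refine ⟨⟨by simp [h1, g1], by simp [h2, g2], by rw [bil_refl_refl h3, g3]⟩, ?_⟩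
      rw [pair_sub, pair_smul, h4, g4]; simp
    · rintro β ⟨⟨h1, h2, h3⟩, h4⟩
      have hd := S.drad β h1
      have hbb : Q.bil (β + δ) (β + δ) = 2 := by
        simp only [bil_add_left, bil_add_right, bil_comm β δ, hd, S.delta_self, h3]; norm_num
      have h5 := key (β + δ) (S.add_delta_nonneg h1 h2 h3) (by simp [h1, S.dj]) hbb
        (by rw [pair_add, h4, hlδ, add_zero])
      have e1 : Q.bil α δ = -1 := by
        have : α = (α - Q.ev j) + Q.ev j := by module
        rw [this, bil_add_left, bil_comm (Q.ev j), hdj, bil_comm, S.drad _ (by simp [hαj, hjj])]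
        norm_num
      have e2 : Q.bil γ β = Q.bil α β := by
        rw [hγ, bil_sub_left, bil_sub_left, bil_smul_left, hd, S.jx, h1, h2]; ring
      rw [bil_add_right, e1] at h5
      rw [e2]
      linarith
  have hαe : α = Q.ev j + α k • δ := by
    have : α = γ + Q.ev j + α k • δ := by rw [hγ]; module
    rw [hγ0, zero_add] at this
    exact this
  rcases (hα.1.1.2.1 k).eq_or_lt with h0 | hpos
  · rw [hαe, ← h0]; simp
  · exfalso
    have hjR : Q.ev j ∈ Q.Rplus K l := by
      refine ⟨⟨IsRoot.simple j S.lfj, fun i => by unfold ev; split_ifs <;> norm_num, ?_⟩, ?_⟩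
      · intro h
        rw [h] at hjj
        simp at hjj
      · simp [pair, ev, hlj]
    have hδR : δ ∈ Q.Rplus K l := by
      refine ⟨⟨S.delta_root, S.dnn, ?_⟩, hlδ⟩
      intro h
      have := S.dk
      rw [h] at this
      simp at this
    have := sigma_split K hα hjR hδR _ hpos hαe
    have e1 := two_pp α
    have e2 := two_pp δ
    have e3 := two_pp (Q.ev j)
    have e4 : Q.bil α α = 2 - 2 * α k := by
      rw [hαe]
      simp only [bil_add_left, bil_add_right, bil_smul_left, bil_smul_right, S.delta_self,
        hdj, bil_comm (Q.ev j) δ, bil_ev_loopfree S.lfj, Pi.add_apply, Pi.smul_apply, hjk, S.dk,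
        smul_eq_mul]
      ring
    rw [S.delta_self] at e2
    rw [bil_ev_loopfree S.lfj] at e3
    have e5 : Q.pp δ = 1 := by linarith
    rw [e5] at this
    linarith

theorem bil_ev_zero {x : Q.I → ℤ} (hx : ∀ i, 0 ≤ x i) {u v : Q.I} (hv : x v = 0)
    (h : Q.bil x (Q.ev v) = 0) (huv : Q.Adj u v) : x u = 0 := by
  have hev : ∀ i, 0 ≤ Q.ev v i := fun i => by unfold ev; split_ifs <;> norm_num
  rw [bil_eq] at h
  have h1 : ∑ i, 2 * x i * Q.ev v i = 0 := by simp [ev, hv]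
  have hnn : ∀ a ∈ (Finset.univ : Finset Q.A),
      0 ≤ x (Q.h a) * Q.ev v (Q.t a) + x (Q.t a) * Q.ev v (Q.h a) := fun a _ =>
    add_nonneg (mul_nonneg (hx _) (hev _)) (mul_nonneg (hx _) (hev _))
  have h2 : ∑ a : Q.A, (x (Q.h a) * Q.ev v (Q.t a) + x (Q.t a) * Q.ev v (Q.h a)) = 0 := by
    linarith
  rw [Finset.sum_eq_zero_iff_of_nonneg hnn] at h2
  obtain ⟨a, ha⟩ := huv
  have h3 := h2 a (Finset.mem_univ a)
  have h4 := mul_nonneg (hx (Q.h a)) (hev (Q.t a))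
  have h5 := mul_nonneg (hx (Q.t a)) (hev (Q.h a))
  rcases ha with ⟨e1, e2⟩ | ⟨e1, e2⟩
  · have : x (Q.h a) * Q.ev v (Q.t a) = 0 := by linarith
    simpa [e1, e2, ev] using this
  · have : x (Q.t a) * Q.ev v (Q.h a) = 0 := by linarith
    simpa [e1, e2, ev] using this

section Restrict

variable {j k : Q.I} {b : Q.A} (hh : ∀ a ∈ {a : Q.A | a ≠ b}, Q.h a ∈ {i : Q.I | i ≠ j})
  (ht : ∀ a ∈ {a : Q.A | a ≠ b}, Q.t a ∈ {i : Q.I | i ≠ j})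

theorem bil_restrict (hb : Q.h b = j ∨ Q.t b = j) {x y : Q.I → ℤ} (hx : x j = 0) (hy : y j = 0) :
    (Q.restrict {i | i ≠ j} {a | a ≠ b} hh ht).bil (fun i => x i.1) (fun i => y i.1) =
      Q.bil x y := by
  rw [bil_eq, bil_eq]
  congr 1
  · refine Fintype.sum_of_injective
      (fun i : (Q.restrict {i | i ≠ j} {a | a ≠ b} hh ht).I => i.1)
      (fun _ _ h => Subtype.ext h) _ _ ?_ (fun _ => rfl)
    intro i hi
    have : i = j := by
      by_contra h
      exact hi ⟨⟨i, h⟩, rfl⟩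
    simp [this, hx]
  · refine Fintype.sum_of_injective
      (fun i : (Q.restrict {i | i ≠ j} {a | a ≠ b} hh ht).A => i.1)
      (fun _ _ h => Subtype.ext h) _ _ ?_ (fun _ => rfl)
    intro a ha
    have : a = b := by
      by_contra h
      exact ha ⟨⟨a, h⟩, rfl⟩
    rcases hb with hb | hb <;> simp [this, hb, hx, hy]

theorem ev_restrict (i : (Q.restrict {i | i ≠ j} {a | a ≠ b} hh ht).I) :
    (Q.restrict {i | i ≠ j} {a | a ≠ b} hh ht).ev i = fun t => Q.ev i.1 t.1 := by
  funext t
  unfold ev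
  by_cases h : t = i
  · rw [if_pos h, if_pos (congrArg Subtype.val h)]
  · rw [if_neg h, if_neg (fun e => h (Subtype.ext e))]

theorem adj_restrict {u v : (Q.restrict {i | i ≠ j} {a | a ≠ b} hh ht).I}
    (h : (Q.restrict {i | i ≠ j} {a | a ≠ b} hh ht).Adj u v) : Q.Adj u.1 v.1 := by
  obtain ⟨a, h⟩ := h
  refine ⟨a.1, ?_⟩
  rcases h with ⟨h1, h2⟩ | ⟨h1, h2⟩
  · exact Or.inl ⟨congrArg Subtype.val h1, congrArg Subtype.val h2⟩
  · exact Or.inr ⟨congrArg Subtype.val h1, congrArg Subtype.val h2⟩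

theorem setup_of {δ : Q.I → ℤ} (hjk : j ≠ k)
    (hb : (Q.h b = j ∧ Q.t b = k) ∨ (Q.h b = k ∧ Q.t b = j))
    (honly : ∀ a : Q.A, Q.h a = j ∨ Q.t a = j → a = b)
    (hED : (Q.restrict {i | i ≠ j} {a | a ≠ b} hh ht).IsExtDynkin)
    (hmin : (Q.restrict {i | i ≠ j} {a | a ≠ b} hh ht).IsMinImag (fun i => δ i.1))
    (hδj : δ j = 0) (hδk : δ k = 1) : Setup Q j k δ := by
  have hb' : Q.h b = j ∨ Q.t b = j := by tauto
  have dnn : ∀ i, 0 ≤ δ i := by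
    intro i
    by_cases hi : i = j
    · rw [hi, hδj]
    · exact hmin.1 ⟨i, hi⟩
  have drad : ∀ x : Q.I → ℤ, x j = 0 → Q.bil δ x = 0 := by
    intro x hx
    rw [← bil_restrict hh ht hb' hδj hx, bil_expand]
    exact Finset.sum_eq_zero fun i _ => by rw [hmin.2.2.1 i, mul_zero]
  have dpos : ∀ i, i ≠ j → 0 < δ i := by
    intro i hi
    have path := hED.1 ⟨k, hjk.symm⟩ ⟨i, hi⟩
    have : ∀ u, Relation.ReflTransGen (Q.restrict {i | i ≠ j} {a | a ≠ b} hh ht).Adj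
        ⟨k, hjk.symm⟩ u → 0 < δ u.1 := by
      intro u hu
      induction hu with
      | refl => show 0 < δ k; rw [hδk]; norm_num
      | tail _ hbc ih =>
        rename_i v w _
        refine lt_of_le_of_ne (dnn _) fun h0 => ?_
        have hw : j ≠ w.1 := fun e => w.2 e.symm
        have := bil_ev_zero dnn h0.symm (drad _ (by simp [ev, hw])) (adj_restrict hh ht hbc)
        omega
    exact this _ path
  refine ⟨?_, dnn, hδj, hδk, drad, ?_, dpos, ?_, ?_, ?_, hjk⟩
  · intro x hx
    rw [← bil_restrict hh ht hb' hx hx]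
    exact hED.2.1 _
  · intro x hx hxj hrad hx0 i
    by_cases hi : i = j
    · rw [hi, hδj, hxj]
    · refine hmin.2.2.2 (fun i => x i.1) (fun i => hx i.1) ?_ ?_ ⟨i, hi⟩
      · intro h0
        apply hx0
        funext t
        by_cases htj : t = j
        · rw [htj, hxj]; rfl
        · exact congrFun h0 ⟨t, htj⟩
      · intro t
        have htj : j ≠ t.1 := fun e => t.2 e.symm
        have h0 : Q.ev t.1 j = 0 := by simp [ev, htj]
        rw [ev_restrict, bil_restrict hh ht hb' hxj h0]
        exact hrad _ h0
  · intro x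
    rw [bil_eq, Finset.sum_eq_single j, Finset.sum_eq_single b]
    · rcases hb with ⟨h1, h2⟩ | ⟨h1, h2⟩ <;> simp [h1, h2, ev, hjk.symm]
    · intro a _ hab
      have h1 : Q.h a ≠ j := fun h => hab (honly a (Or.inl h))
      have h2 : Q.t a ≠ j := fun h => hab (honly a (Or.inr h))
      simp [ev, h1, h2]
    · simp
    · intro i _ hi
      simp [ev, hi]
    · simp
  · intro a ha
    have := honly a (Or.inl ha.1)
    rw [this] at ha
    rcases hb with ⟨h1, h2⟩ | ⟨h1, h2⟩
    · exact hjk (ha.2.symm.trans h2)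
    · exact hjk (ha.1.symm.trans h1)
  · intro u v hu hv
    have huj : u ≠ j := fun e => hu (by rw [e, hδj])
    have hvj : v ≠ j := fun e => hv (by rw [e, hδj])
    have path := hED.1 ⟨u, huj⟩ ⟨v, hvj⟩
    refine path.lift (fun i : (Q.restrict {i | i ≠ j} {a | a ≠ b} hh ht).I => i.1) ?_
    intro p q hpq
    exact ⟨(dpos _ p.2).ne', (dpos _ q.2).ne', adj_restrict hh ht hpq⟩

end Restrict

end FinQuiver

/-- let `Q` be obtained from an extended Dynkin quiver `Q'` (with
extending vertex `k` and minimal positive imaginary root `δ`, regarded as a vector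
on `Q` with `δ_j = 0`) by adjoining one vertex `j` and one arrow `b` joining `j`
to `k`.  If `λ·δ = λ_j = 0`, `α ∈ Σ_λ`, `α_j = 1` and `mδ − α' ∈ ℕR_λ^+` for some
`m ≥ 0` (where `α' = α − α_j ε_j`), then `α = ε_j`. -/
theorem stmt16 (Q : FinQuiver) (K : Type) [Field K] [CharZero K] [IsAlgClosed K]
    (l : Q.I → K) (j k : Q.I) (b : Q.A) (δ α : Q.I → ℤ) (m : ℕ)
    (hjk : j ≠ k)
    (hb : (Q.h b = j ∧ Q.t b = k) ∨ (Q.h b = k ∧ Q.t b = j))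
    (honly : ∀ a : Q.A, Q.h a = j ∨ Q.t a = j → a = b)
    (hED : (Q.restrict {i | i ≠ j} {a | a ≠ b}
        (fun a ha hja => ha (honly a (Or.inl hja)))
        (fun a ha hja => ha (honly a (Or.inr hja)))).IsExtDynkin)
    (hmin : (Q.restrict {i | i ≠ j} {a | a ≠ b}
        (fun a ha hja => ha (honly a (Or.inl hja)))
        (fun a ha hja => ha (honly a (Or.inr hja)))).IsMinImag (fun i => δ i.1))
    (hδj : δ j = 0) (hδk : δ k = 1)
    (hlδ : Q.pair K l δ = 0) (hlj : l j = 0)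
    (hα : α ∈ Q.SigmaSet K l) (hαj : α j = 1)
    (hrem : m • δ - (α - α j • Q.ev j) ∈ Q.NRplus K l) :
    α = Q.ev j := by
  exact (FinQuiver.setup_of _ _ hjk hb honly hED hmin hδj hδk).main K l α m hlδ hlj hα hαj hrem

end
end
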